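/- Let G and G' be achievement positional games on disjoint vertex sets. If o(G)=L and o(G')=R, then o(G∪G') ≠ D; that is, it is not the case that optimal play on G∪G' leads to a draw both when Left starts and when Right starts. -/

import Mathlib

namespace APG

/-- The two players: Left and Right. -/
inductive Player : Type
  | L : Player
  | R : Player
deriving DecidableEq, Repr

/-- The opponent of a player. -/
def Player.other : Player → Player
  | .L => .R
  | .R => .L

/-- An achievement positional game: a finite vertex set together with the set of
blue edges (Left's winning sets) and the set of red edges (Right's winning sets). -/
structure Game : Type where
  V : Finset ℕ
  EL : Finset (Finset ℕ)
  ER : Finset (Finset ℕ)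

/-- The edges are nonempty subsets of the vertex set. -/
def WellFormed (G : Game) : Prop :=
  (∀ e ∈ G.EL, e ⊆ G.V ∧ e.Nonempty) ∧ (∀ e ∈ G.ER, e ⊆ G.V ∧ e.Nonempty)

/-- The winning sets of a given player. -/
def Game.edges (G : Game) : Player → Finset (Finset ℕ)
  | .L => G.EL
  | .R => G.ER

/-- The player who makes the `i`-th move (0-indexed) when `s` moves first. -/
def mover (s : Player) (i : ℕ) : Player := if i % 2 = 0 then s else s.other

/-- The set of vertices picked by player `p` along the history `h`
(the chronological list of the moves played so far), when `s` moved first. -/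
def picked (s p : Player) (h : List ℕ) : Finset ℕ :=
  ((Finset.range h.length).filter fun i => mover s i = p).image fun i => h.getD i 0

/-- The set `S` of picked vertices fills some edge of `E`. -/
def fills (E : Finset (Finset ℕ)) (S : Finset ℕ) : Prop := ∃ e ∈ E, e ⊆ S

/-- The game is over: some player has picked all the vertices of one of their edges. -/
def ended (G : Game) (s : Player) (h : List ℕ) : Prop :=
  fills G.EL (picked s .L h) ∨ fills G.ER (picked s .R h)

/-- `h` is a legal history: no vertex is picked twice, every picked vertex belongs to
the board, and no move is made after the game has ended. -/
def ValidHist (G : Game) (s : Player) (h : List ℕ) : Prop :=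
  h.Nodup ∧ (∀ x ∈ h, x ∈ G.V) ∧ ∀ k, k < h.length → ¬ ended G s (h.take k)

/-- A strategy: a map assigning to each position (history) a vertex to pick. -/
abbrev Strategy := List ℕ → ℕ

/-- Along `h`, every move of player `p` agrees with the strategy `σ`. -/
def Follows (s p : Player) (σ : Strategy) (h : List ℕ) : Prop :=
  ∀ k, k < h.length → mover s k = p → h.getD k 0 = σ (h.take k)

/-- A finished play: either the game has ended or all vertices have been picked. -/
def Complete (G : Game) (s : Player) (h : List ℕ) : Prop :=
  ended G s h ∨ h.length = G.V.card

/-- The strategy `σ` of player `p` always suggests a legal move (an unpicked vertex)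
whenever the game is not over and it is `p`'s turn. -/
def Legal (G : Game) (s p : Player) (σ : Strategy) : Prop :=
  ∀ h, ValidHist G s h → Follows s p σ h → ¬ ended G s h → h.length < G.V.card →
    mover s h.length = p → σ h ∈ G.V ∧ σ h ∉ h

/-- Player `p` has a winning strategy on `G` when `s` moves first: following it,
every finished play ends with `p` having filled one of their edges (and, the game
having ended right there, the opponent has not filled an edge first). -/
def WinsAs (G : Game) (s p : Player) : Prop :=
  ∃ σ : Strategy, Legal G s p σ ∧
    ∀ h, ValidHist G s h → Follows s p σ h → Complete G s h →
      fills (G.edges p) (picked s p h)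

/-- Player `p` has a non-losing strategy on `G` when `s` moves first: following it,
the opponent never fills one of their edges. -/
def NonLosingAs (G : Game) (s p : Player) : Prop :=
  ∃ σ : Strategy, Legal G s p σ ∧
    ∀ h, ValidHist G s h → Follows s p σ h → Complete G s h →
      ¬ fills (G.edges p.other) (picked s p.other h)

/-- The possible results of the game, for a fixed starting player. -/
inductive Result : Type
  | Lwin : Result
  | draw : Result
  | Rwin : Result
deriving DecidableEq, Repr

/-- The result of `G` with optimal play, when `s` moves first, is `r`:
a win for a player means that player has a winning strategy, a draw means
both players have non-losing strategies. -/
def resultIs (G : Game) (s : Player) : Result → Prop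
  | .Lwin => WinsAs G s .L
  | .Rwin => WinsAs G s .R
  | .draw => NonLosingAs G s .L ∧ NonLosingAs G s .R

/-- An outcome: the pair of results with optimal play
(when Left starts, when Right starts). -/
abbrev Outcome := Result × Result

/-- `G` has outcome `o`. -/
def hasOutcome (G : Game) (o : Outcome) : Prop :=
  resultIs G .L o.1 ∧ resultIs G .R o.2

/-- Numerical value of a result, from Left's point of view:
Right wins < draw < Left wins. -/
def Result.val : Result → ℕ
  | .Rwin => 0
  | .draw => 1
  | .Lwin => 2

/-- The partial order `≤_L` on outcomes, comparing both components simultaneously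
from Left's point of view. -/
def outLE (o o' : Outcome) : Prop := o.1.val ≤ o'.1.val ∧ o.2.val ≤ o'.2.val

def oL : Outcome := (.Lwin, .Lwin)
def oLminus : Outcome := (.Lwin, .draw)
def oN : Outcome := (.Lwin, .Rwin)
def oD : Outcome := (.draw, .draw)
def oRminus : Outcome := (.draw, .Rwin)
def oR : Outcome := (.Rwin, .Rwin)

/-- The updated game `G_u` after Left has picked `u`. -/
def subL (G : Game) (u : ℕ) : Game where
  V := G.V.erase u
  EL := G.EL.image fun e => e.erase u
  ER := G.ER.filter fun e => u ∉ e

/-- The updated game `G^u` after Right has picked `u`. -/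
def subR (G : Game) (u : ℕ) : Game where
  V := G.V.erase u
  EL := G.EL.filter fun e => u ∉ e
  ER := G.ER.image fun e => e.erase u

/-- The updated game `G_u^v` after Left has picked `u` and Right has picked `v`. -/
def updLR (G : Game) (u v : ℕ) : Game where
  V := (G.V.erase u).erase v
  EL := (G.EL.filter fun e => v ∉ e).image fun e => e.erase u
  ER := (G.ER.filter fun e => u ∉ e).image fun e => e.erase v

/-- The disjoint union of two games. -/
def gunion (G G' : Game) : Game where
  V := G.V ∪ G'.V
  EL := G.EL ∪ G'.EL
  ER := G.ER ∪ G'.ER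

/-!
Write `a ≤ 0` (`0 ≤ a`) if Right (Left) does not lose from `a` when the opponent moves first, and
let `x ⊲ y` mean `x + w ≤ 0 ≤ y + w` for some position `w` of the second game. Non-losing strategies
can be added, and cancelled against an opposite one, so `⊲` is transitive.

If both games on the union were drawn, the start of `G` would satisfy `a ⊲ a`, while Left wins from
`a` when Right moves first. Take such an `a` of minimal size, so that `⊲` is irreflexive on the
smaller positions which Left wins moving second. Playing the witnessing strategies of Left and Right
against each other turns a chain of length `n` of such positions, ending in a Left option of `a`,
into a chain of length `n + 1` ending in a Left option of `a`. This is impossible, as there are only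
finitely many positions.
-/

theorem Player.other_other (p : Player) : p.other.other = p := by cases p <;> rfl

theorem Player.eq_or_eq_other (p q : Player) : q = p ∨ q = p.other := by
  cases p <;> cases q <;> decide

theorem Player.other_ne (p : Player) : p.other ≠ p := by cases p <;> decide

instance : Fintype Player := ⟨{.L, .R}, by rintro (_ | _) <;> decide⟩

/-- A two-player game on a graph of positions in which an extra move never hurts. Its positions do
not record whose turn it is, and moves remain available after a win. The relation `le p x y` says
that `y` is at least as good as `x` for the player `p`, and `size` bounds the number of moves
left. -/
structure Arena where
  Pos : Type
  move : Player → Pos → Pos → Prop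
  won : Player → Pos → Prop
  size : Pos → ℕ
  le : Player → Pos → Pos → Prop
  size_lt_of_move : ∀ {p x y}, move p x y → size y < size x
  exists_move_other : ∀ {p x y}, move p x y → ∃ z, move p.other x z
  le_refl : ∀ p x, le p x x
  le_other : ∀ {p x y}, le p x y → le p.other y x
  le_of_move : ∀ {p x y}, move p x y → le p x y
  won_of_le : ∀ {p x y}, le p x y → won p x → won p y
  move_of_le : ∀ {p x x' y}, le p x x' → move p x y → le p y x' ∨ ∃ y', move p x' y' ∧ le p y y'

namespace Arena

mutual

/-- The player `p` can avoid losing from a position in which the opponent is to move. -/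
inductive SafeSecond (X : Arena) (p : Player) : X.Pos → Prop
  | won {x} : ¬ X.won p.other x → X.won p x → SafeSecond X p x
  | forall_move {x} : ¬ X.won p.other x → (∀ y, X.move p.other x y → SafeFirst X p y) →
      SafeSecond X p x

/-- The player `p` can avoid losing from a position in which `p` is to move. -/
inductive SafeFirst (X : Arena) (p : Player) : X.Pos → Prop
  | won {x} : ¬ X.won p.other x → X.won p x → SafeFirst X p x
  | stuck {x} : ¬ X.won p.other x → (∀ y, ¬ X.move p x y) → SafeFirst X p x
  | move {x y} : ¬ X.won p.other x → X.move p x y → SafeSecond X p y → SafeFirst X p x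

end

variable {X Y : Arena} {p : Player}

theorem SafeSecond.not_won_other {x : X.Pos} (h : X.SafeSecond p x) : ¬ X.won p.other x := by
  cases h <;> assumption

theorem SafeFirst.not_won_other {x : X.Pos} (h : X.SafeFirst p x) : ¬ X.won p.other x := by
  cases h <;> assumption

theorem SafeSecond.safeFirst_of_move {x y : X.Pos} (h : X.SafeSecond p x) (hp : ¬ X.won p x)
    (hxy : X.move p.other x y) : X.SafeFirst p y := by
  cases h with
  | won _ h => exact absurd h hp
  | forall_move _ h => exact h y hxy

theorem SafeFirst.stuck_or_exists_move {x : X.Pos} (h : X.SafeFirst p x) (hp : ¬ X.won p x) :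
    (∀ y, ¬ X.move p x y) ∨ ∃ y, X.move p x y ∧ X.SafeSecond p y := by
  cases h with
  | won _ h => exact absurd h hp
  | stuck _ h => exact .inl h
  | move _ h h' => exact .inr ⟨_, h, h'⟩

theorem safeSecond_of_stuck {x : X.Pos} (hp : ¬ X.won p.other x) (h : ∀ y, ¬ X.move p x y) :
    X.SafeSecond p x :=
  .forall_move hp fun _ hy =>
    have ⟨z, hz⟩ := X.exists_move_other hy
    absurd (p.other_other ▸ hz) (h z)

theorem not_won_other_of_le {x y : X.Pos} (hle : X.le p x y) (h : ¬ X.won p.other x) :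
    ¬ X.won p.other y :=
  mt (X.won_of_le (X.le_other hle)) h

theorem move_other_of_le {x x' y' : X.Pos} (hle : X.le p x x') (hm : X.move p.other x' y') :
    X.le p x y' ∨ ∃ y, X.move p.other x y ∧ X.le p y y' := by
  have le_of_other {z z' : X.Pos} (h : X.le p.other z z') : X.le p z' z :=
    p.other_other ▸ X.le_other h
  exact (X.move_of_le (X.le_other hle) hm).imp le_of_other
    fun ⟨y, hy, h⟩ => ⟨y, hy, le_of_other h⟩

mutual

theorem SafeSecond.mono {x x' : X.Pos} (h : X.SafeSecond p x) (hle : X.le p x x') :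
    X.SafeSecond p x' := by
  have hx' := not_won_other_of_le hle h.not_won_other
  by_cases hp : X.won p x
  · exact .won hx' (X.won_of_le hle hp)
  refine .forall_move hx' fun y' hy' => ?_
  have := X.size_lt_of_move hy'
  rcases move_other_of_le hle hy' with hle' | ⟨y, hy, hle'⟩
  · exact (h.mono hle').safeFirst
  · exact (h.safeFirst_of_move hp hy).mono hle'
termination_by (X.size x', 0)

theorem SafeSecond.safeFirst {x : X.Pos} (h : X.SafeSecond p x) : X.SafeFirst p x := by
  by_cases hs : ∃ y, X.move p x y
  · obtain ⟨y, hy⟩ := hs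
    have := X.size_lt_of_move hy
    exact .move h.not_won_other hy (h.mono (X.le_of_move hy))
  · exact .stuck h.not_won_other (not_exists.1 hs)
termination_by (X.size x, 0)

theorem SafeFirst.mono {x x' : X.Pos} (h : X.SafeFirst p x) (hle : X.le p x x') :
    X.SafeFirst p x' := by
  have hx' := not_won_other_of_le hle h.not_won_other
  cases h with
  | won _ h => exact .won hx' (X.won_of_le hle h)
  | stuck hx h => exact ((safeSecond_of_stuck hx h).mono hle).safeFirst
  | move _ hy h =>
    rcases X.move_of_le hle hy with hle' | ⟨y', hy', hle'⟩
    · exact (h.mono hle').safeFirst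
    · have := X.size_lt_of_move hy'
      exact .move hx' hy' (h.mono hle')
termination_by (X.size x', 1)

end

/-- A map between arenas that preserves and reflects moves and wins. -/
structure IsBisim (f : X.Pos → Y.Pos) : Prop where
  move_map : ∀ {p x x'}, X.move p x x' → Y.move p (f x) (f x')
  move_lift : ∀ {p x y'}, Y.move p (f x) y' → ∃ x', X.move p x x' ∧ f x' = y'
  won_iff : ∀ {p x}, Y.won p (f x) ↔ X.won p x

mutual

theorem IsBisim.safeSecond {f : X.Pos → Y.Pos} (hf : IsBisim f) {x : X.Pos}
    (h : X.SafeSecond p x) : Y.SafeSecond p (f x) := by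
  have hx := mt hf.won_iff.1 h.not_won_other
  cases h with
  | won _ h => exact .won hx (hf.won_iff.2 h)
  | forall_move _ h =>
    refine .forall_move hx fun y' hy' => ?_
    obtain ⟨x', hx', rfl⟩ := hf.move_lift hy'
    have := X.size_lt_of_move hx'
    exact hf.safeFirst (h x' hx')
termination_by X.size x

theorem IsBisim.safeFirst {f : X.Pos → Y.Pos} (hf : IsBisim f) {x : X.Pos}
    (h : X.SafeFirst p x) : Y.SafeFirst p (f x) := by
  have hx := mt hf.won_iff.1 h.not_won_other
  cases h with
  | won _ h => exact .won hx (hf.won_iff.2 h)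
  | stuck _ h =>
    refine .stuck hx fun y' hy' => ?_
    obtain ⟨x', hx', -⟩ := hf.move_lift hy'
    exact h x' hx'
  | move _ hx' h =>
    have := X.size_lt_of_move hx'
    exact .move hx (hf.move_map hx') (hf.safeSecond h)
termination_by X.size x

end

/-! ### Sums of arenas -/

/-- A move in a disjoint sum of two arenas: a move in one of the components. -/
inductive ProdMove (X Y : Arena) (p : Player) : X.Pos × Y.Pos → X.Pos × Y.Pos → Prop
  | left {x x' y} : X.move p x x' → ProdMove X Y p (x, y) (x', y)
  | right {x y y'} : Y.move p y y' → ProdMove X Y p (x, y) (x, y')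

/-- The disjoint sum of two arenas, won by whoever wins in one of the components. -/
def prod (X Y : Arena) : Arena where
  Pos := X.Pos × Y.Pos
  move := ProdMove X Y
  won p a := X.won p a.1 ∨ Y.won p a.2
  size a := X.size a.1 + Y.size a.2
  le p a b := X.le p a.1 b.1 ∧ Y.le p a.2 b.2
  size_lt_of_move := by
    rintro p _ _ (h | h)
    · exact Nat.add_lt_add_right (X.size_lt_of_move h) _
    · exact Nat.add_lt_add_left (Y.size_lt_of_move h) _
  exists_move_other := by
    rintro p _ _ (h | h)
    · exact (X.exists_move_other h).elim fun _ h' => ⟨_, .left h'⟩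
    · exact (Y.exists_move_other h).elim fun _ h' => ⟨_, .right h'⟩
  le_refl p a := ⟨X.le_refl p a.1, Y.le_refl p a.2⟩
  le_other h := ⟨X.le_other h.1, Y.le_other h.2⟩
  le_of_move := by
    rintro p _ _ (h | h)
    · exact ⟨X.le_of_move h, Y.le_refl p _⟩
    · exact ⟨X.le_refl p _, Y.le_of_move h⟩
  won_of_le h := Or.imp (X.won_of_le h.1) (Y.won_of_le h.2)
  move_of_le := by
    rintro p _ ⟨x', y'⟩ _ ⟨hx, hy⟩ (h | h)
    · exact (X.move_of_le hx h).imp (⟨·, hy⟩) fun ⟨_, h', hle⟩ => ⟨_, .left h', hle, hy⟩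
    · exact (Y.move_of_le hy h).imp (⟨hx, ·⟩) fun ⟨_, h', hle⟩ => ⟨_, .right h', hx, hle⟩

theorem isBisim_prod_swap : IsBisim (X := X.prod Y) (Y := Y.prod X) Prod.swap where
  move_map := by rintro p _ _ (h | h); exacts [.right h, .left h]
  move_lift := by
    rintro p ⟨x, y⟩ _ (h | h)
    exacts [⟨_, .right h, rfl⟩, ⟨_, .left h, rfl⟩]
  won_iff := or_comm

theorem isBisim_prod_exchange :
    IsBisim (X := (X.prod Y).prod (X.prod Y)) (Y := (X.prod Y).prod (X.prod Y))
      fun a => ((a.2.1, a.1.2), (a.1.1, a.2.2)) where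
  move_map := by
    rintro p _ _ ((h | h) | (h | h))
    exacts [.right (.left h), .left (.right h), .left (.left h), .right (.right h)]
  move_lift := by
    rintro p ⟨⟨x, y⟩, ⟨x', y'⟩⟩ _ ((h | h) | (h | h))
    exacts [⟨_, .right (.left h), rfl⟩, ⟨_, .left (.right h), rfl⟩, ⟨_, .left (.left h), rfl⟩,
      ⟨_, .right (.right h), rfl⟩]
  won_iff := by
    rintro p ⟨⟨x, y⟩, ⟨x', y'⟩⟩
    simp only [prod]
    tauto

section Sum

variable {x x' : X.Pos} {y y' : Y.Pos}

theorem not_won_prod (hx : ¬ X.won p x) (hy : ¬ Y.won p y) : ¬ (X.prod Y).won p (x, y) :=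
  not_or.2 ⟨hx, hy⟩

theorem SafeSecond.not_won_left (h : (X.prod Y).SafeSecond p (x, y)) : ¬ X.won p.other x :=
  (not_or.1 h.not_won_other).1

theorem SafeSecond.not_won_right (h : (X.prod Y).SafeSecond p (x, y)) : ¬ Y.won p.other y :=
  (not_or.1 h.not_won_other).2

theorem SafeFirst.not_won_left (h : (X.prod Y).SafeFirst p (x, y)) : ¬ X.won p.other x :=
  (not_or.1 h.not_won_other).1

theorem SafeFirst.not_won_right (h : (X.prod Y).SafeFirst p (x, y)) : ¬ Y.won p.other y :=
  (not_or.1 h.not_won_other).2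

theorem SafeSecond.safeFirst_of_move_left (h : (X.prod Y).SafeSecond p (x, y))
    (hx : ¬ X.won p x) (hy : ¬ Y.won p y) (hm : X.move p.other x x') :
    (X.prod Y).SafeFirst p (x', y) :=
  h.safeFirst_of_move (not_won_prod hx hy) (.left hm)

theorem SafeSecond.safeFirst_of_move_right (h : (X.prod Y).SafeSecond p (x, y))
    (hx : ¬ X.won p x) (hy : ¬ Y.won p y) (hm : Y.move p.other y y') :
    (X.prod Y).SafeFirst p (x, y') :=
  h.safeFirst_of_move (not_won_prod hx hy) (.right hm)

theorem SafeFirst.stuck_or_exists_move_prod (h : (X.prod Y).SafeFirst p (x, y))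
    (hx : ¬ X.won p x) (hy : ¬ Y.won p y) :
    ((∀ x', ¬ X.move p x x') ∧ ∀ y', ¬ Y.move p y y') ∨
      (∃ x', X.move p x x' ∧ (X.prod Y).SafeSecond p (x', y)) ∨
      ∃ y', Y.move p y y' ∧ (X.prod Y).SafeSecond p (x, y') := by
  rcases h.stuck_or_exists_move (not_won_prod hx hy) with hs | ⟨_, hm | hm, h'⟩
  · exact .inl ⟨fun _ hm => hs _ (.left hm), fun _ hm => hs _ (.right hm)⟩
  · exact .inr (.inl ⟨_, hm, h'⟩)
  · exact .inr (.inr ⟨_, hm, h'⟩)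

end Sum

mutual

theorem SafeSecond.prod {x : X.Pos} {y : Y.Pos} (hx : X.SafeSecond p x) (hy : Y.SafeSecond p y) :
    (X.prod Y).SafeSecond p (x, y) := by
  have hxy := not_won_prod hx.not_won_other hy.not_won_other
  by_cases hp : (X.prod Y).won p (x, y)
  · exact .won hxy hp
  obtain ⟨hpx, hpy⟩ := not_or.1 hp
  refine .forall_move hxy ?_
  rintro _ (hm | hm)
  · have := X.size_lt_of_move hm
    exact (hx.safeFirst_of_move hpx hm).prod_safeSecond hy
  · have := Y.size_lt_of_move hm
    exact hx.prod_safeFirst (hy.safeFirst_of_move hpy hm)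
termination_by (X.size x + Y.size y, 0)

theorem SafeFirst.prod_safeSecond {x : X.Pos} {y : Y.Pos} (hx : X.SafeFirst p x)
    (hy : Y.SafeSecond p y) : (X.prod Y).SafeFirst p (x, y) := by
  have hxy := not_won_prod hx.not_won_other hy.not_won_other
  by_cases hpx : X.won p x
  · exact .won hxy (.inl hpx)
  rcases hx.stuck_or_exists_move hpx with hs | ⟨x', hm, hx'⟩
  · exact ((safeSecond_of_stuck hx.not_won_other hs).prod hy).safeFirst
  · have := X.size_lt_of_move hm
    exact .move hxy (.left hm) (hx'.prod hy)
termination_by (X.size x + Y.size y, 1)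

theorem SafeSecond.prod_safeFirst {x : X.Pos} {y : Y.Pos} (hx : X.SafeSecond p x)
    (hy : Y.SafeFirst p y) : (X.prod Y).SafeFirst p (x, y) := by
  have hxy := not_won_prod hx.not_won_other hy.not_won_other
  by_cases hpy : Y.won p y
  · exact .won hxy (.inr hpy)
  rcases hy.stuck_or_exists_move hpy with hs | ⟨y', hm, hy'⟩
  · exact (hx.prod (safeSecond_of_stuck hy.not_won_other hs)).safeFirst
  · have := Y.size_lt_of_move hm
    exact .move hxy (.right hm) (hx.prod hy')
termination_by (X.size x + Y.size y, 1)

end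

mutual

theorem SafeSecond.cancel_right {x : X.Pos} {y : Y.Pos} (h : (X.prod Y).SafeSecond p (x, y))
    (hy : Y.SafeSecond p.other y) : X.SafeSecond p x := by
  have hpy : ¬ Y.won p y := p.other_other ▸ hy.not_won_other
  by_cases hpx : X.won p x
  · exact .won h.not_won_left hpx
  refine .forall_move h.not_won_left fun x' hm => ?_
  have := X.size_lt_of_move hm
  exact (h.safeFirst_of_move_left hpx hpy hm).cancel_right hy
termination_by X.size x + Y.size y

theorem SafeFirst.cancel_right {x : X.Pos} {y : Y.Pos} (h : (X.prod Y).SafeFirst p (x, y))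
    (hy : Y.SafeSecond p.other y) : X.SafeFirst p x := by
  have hpy : ¬ Y.won p y := p.other_other ▸ hy.not_won_other
  by_cases hpx : X.won p x
  · exact .won h.not_won_left hpx
  rcases h.stuck_or_exists_move_prod hpx hpy with ⟨hs, -⟩ | ⟨x', hm, h'⟩ | ⟨y', hm, h'⟩
  · exact .stuck h.not_won_left hs
  · have := X.size_lt_of_move hm
    exact .move h.not_won_left hm (h'.cancel_right hy)
  · have := Y.size_lt_of_move hm
    have hF : Y.SafeFirst p.other y' :=
      hy.safeFirst_of_move h.not_won_right (p.other_other.symm ▸ hm)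
    have hpy' : ¬ Y.won p y' := p.other_other ▸ hF.not_won_other
    rcases hF.stuck_or_exists_move h'.not_won_right with hs | ⟨y'', hm', hy''⟩
    · exact (h'.cancel_right (safeSecond_of_stuck hF.not_won_other hs)).safeFirst
    · have := Y.size_lt_of_move hm'
      exact (h'.safeFirst_of_move_right hpx hpy' hm').cancel_right hy''
termination_by X.size x + Y.size y

end

theorem SafeSecond.safeFirst_left {x : X.Pos} {y : Y.Pos} (h : (X.prod Y).SafeSecond p (x, y))
    (hy : Y.SafeFirst p.other y) : X.SafeFirst p x := by
  have hpy : ¬ Y.won p y := p.other_other ▸ hy.not_won_other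
  by_cases hpx : X.won p x
  · exact .won h.not_won_left hpx
  rcases hy.stuck_or_exists_move h.not_won_right with hs | ⟨y', hm, hy'⟩
  · exact (h.cancel_right (safeSecond_of_stuck hy.not_won_other hs)).safeFirst
  · exact (h.safeFirst_of_move_right hpx hpy hm).cancel_right hy'

theorem SafeSecond.safeFirst_right {x : X.Pos} {y : Y.Pos} (h : (X.prod Y).SafeSecond p (x, y))
    (hx : X.SafeFirst p.other x) : Y.SafeFirst p y :=
  (isBisim_prod_swap.safeSecond h).safeFirst_left hx

/-! ### Ladders -/

/-- The strict order of the argument: `x + w ≤ 0 ≤ y + w` for some position `w` of `Y`, where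
`a ≤ 0` (`0 ≤ a`) means that Right (Left) does not lose from `a` when the opponent is to move. -/
def Precedes (X Y : Arena) (x y : X.Pos) : Prop :=
  ∃ w : Y.Pos, (X.prod Y).SafeSecond .R (x, w) ∧ (X.prod Y).SafeSecond .L (y, w)

-- Add `0 ≤ y + v` to `0 ≤ z + w` and cancel `y + w ≤ 0`.
theorem Precedes.trans {x y z : X.Pos} (hxy : Precedes X Y x y) (hyz : Precedes X Y y z) :
    Precedes X Y x z := by
  obtain ⟨v, hxv, hyv⟩ := hxy
  obtain ⟨w, hyw, hzw⟩ := hyz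
  exact ⟨v, hxv, (isBisim_prod_exchange.safeSecond (hyv.prod hzw)).cancel_right hyw⟩

theorem not_safeFirst_right {x : X.Pos} {w : Y.Pos} (hx : ¬ X.SafeFirst .R x)
    (h : (X.prod Y).SafeSecond .R (x, w)) : ¬ Y.SafeFirst .L w :=
  fun hw => hx (h.safeFirst_left hw)

theorem Precedes.not_safeFirst {x y : X.Pos} (h : Precedes X Y x y) (hx : ¬ X.SafeFirst .R x) :
    ¬ X.SafeFirst .R y := by
  obtain ⟨w, hxw, hyw⟩ := h
  exact fun hy => not_safeFirst_right hx hxw (hyw.safeFirst_right hy)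

/-- `x` is the top of a chain of `n` steps of `Precedes`, all of whose members have size less than
`m` and are won by Left when Right is to move. -/
inductive Ladder (X Y : Arena) (m : ℕ) : ℕ → X.Pos → Prop
  | base {x} : ¬ X.SafeFirst .R x → X.size x < m → Ladder X Y m 0 x
  | step {n x y} : Ladder X Y m n x → Precedes X Y x y → X.size y < m → Ladder X Y m (n + 1) y

namespace Ladder

variable {m n : ℕ} {x : X.Pos}

theorem not_safeFirst (h : Ladder X Y m n x) : ¬ X.SafeFirst .R x := by
  induction h with
  | base hx _ => exact hx
  | step _ hxy _ ih => exact hxy.not_safeFirst ih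

theorem size_lt (h : Ladder X Y m n x) : X.size x < m := by
  cases h <;> assumption

theorem not_won_right (h : Ladder X Y m n x) (hx : ¬ X.won .L x) : ¬ X.won .R x :=
  fun hw => h.not_safeFirst (.won hx hw)

theorem not_safeSecond_of_move {x₁ : X.Pos} (h : Ladder X Y m n x) (hx : ¬ X.won .L x)
    (hm : X.move .R x x₁) : ¬ X.SafeSecond .R x₁ :=
  fun h₁ => h.not_safeFirst (.move hx hm h₁)

-- Right's moves in `z` are answered by Left's strategy on `y + z`, his moves in `x` by `reply`.
-- Left's strategy must eventually move in `y`, and does so when `x + w ≤ 0` for the current `w`.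
theorem exists_step {x y : X.Pos} {z : Y.Pos}
    (reply : ∀ {x x₁ : X.Pos}, Ladder X Y m n x → ¬ X.won .L x → X.move .R x x₁ →
      ¬ X.won .L x₁ → ∃ x₂, X.move .L x₁ x₂ ∧ Ladder X Y m n x₂)
    (hx : Ladder X Y m n x) (hyL : ¬ X.won .L y) (hym : X.size y ≤ m)
    (hxz : (X.prod Y).SafeFirst .R (x, z)) (hyz : (X.prod Y).SafeSecond .L (y, z)) :
    ∃ y', X.move .L y y' ∧ Ladder X Y m (n + 1) y' := by
  have hxL : ¬ X.won .L x := hxz.not_won_left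
  have hzL : ¬ Y.won .L z := hxz.not_won_right
  have hzR : ¬ Y.won .R z := hyz.not_won_right
  have hxR := hx.not_won_right hxL
  rcases hxz.stuck_or_exists_move_prod hxR hzR with ⟨hs, -⟩ | ⟨x₁, hm, hx₁z⟩ | ⟨w, hm, hxw⟩
  · exact absurd (.stuck hxL hs) hx.not_safeFirst
  · have hx₁L : ¬ X.won .L x₁ := hx₁z.not_won_left
    have hx₁R : ¬ X.won .R x₁ := fun h => hx.not_safeSecond_of_move hxL hm (.won hx₁L h)
    obtain ⟨x₂, hm₂, hx₂⟩ := reply hx hxL hm hx₁L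
    have := X.size_lt_of_move hm
    have := X.size_lt_of_move hm₂
    exact exists_step reply hx₂ hyL hym (hx₁z.safeFirst_of_move_left hx₁R hzR hm₂) hyz
  · have hw := not_safeFirst_right hx.not_safeFirst hxw
    have hyw := hyz.safeFirst_of_move_right hyL hzL hm
    have hwR : ¬ Y.won .R w := hyw.not_won_right
    rcases hyw.stuck_or_exists_move_prod hyL hxw.not_won_right
      with ⟨-, hs⟩ | ⟨y', hm', hy'w⟩ | ⟨z', hm', hyz'⟩
    · exact absurd (.stuck hwR hs) hw
    · exact ⟨y', hm', .step hx ⟨w, hxw, hy'w⟩ ((X.size_lt_of_move hm').trans_le hym)⟩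
    · have := Y.size_lt_of_move hm
      have := Y.size_lt_of_move hm'
      exact exists_step reply hx hyL hym (hxw.safeFirst_of_move_right hxR hwR hm') hyz'
termination_by X.size x + Y.size z

theorem exists_reply_zero {x₁ : X.Pos} (hx : Ladder X Y m 0 x) (hxL : ¬ X.won .L x)
    (hm : X.move .R x x₁) (hx₁L : ¬ X.won .L x₁) :
    ∃ x₂, X.move .L x₁ x₂ ∧ Ladder X Y m 0 x₂ := by
  by_contra! hno
  refine hx.not_safeSecond_of_move hxL hm (.forall_move hx₁L fun x₂ hm₂ => ?_)
  by_contra hx₂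
  exact hno x₂ hm₂ (.base hx₂
    (((X.size_lt_of_move hm₂).trans (X.size_lt_of_move hm)).trans hx.size_lt))

theorem exists_reply {x₁ : X.Pos} (hx : Ladder X Y m n x) (hxL : ¬ X.won .L x)
    (hm : X.move .R x x₁) (hx₁L : ¬ X.won .L x₁) :
    ∃ x₂, X.move .L x₁ x₂ ∧ Ladder X Y m n x₂ := by
  induction n generalizing x x₁ with
  | zero => exact hx.exists_reply_zero hxL hm hx₁L
  | succ n ih =>
    have hx₁m := (X.size_lt_of_move hm).trans hx.size_lt
    cases hx with | @step _ v _ hv hvx _ =>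
    obtain ⟨w, hvw, hxw⟩ := hvx
    have hvR : ¬ X.won .R v := hv.not_won_right hvw.not_won_left
    have hwL : ¬ Y.won .L w := hvw.not_won_right
    have hwR : ¬ Y.won .R w := hxw.not_won_right
    rcases (hxw.safeFirst_of_move_left hxL hwL hm).stuck_or_exists_move_prod hx₁L hwL
      with ⟨-, hs⟩ | ⟨x₂, hm₂, hx₂w⟩ | ⟨w', hm', hx₁w'⟩
    · exact absurd (.stuck hwR hs) (not_safeFirst_right hv.not_safeFirst hvw)
    · exact ⟨x₂, hm₂, .step hv ⟨w, hvw, hx₂w⟩ ((X.size_lt_of_move hm₂).trans hx₁m)⟩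
    · exact exists_step ih hv hx₁L hx₁m.le (hvw.safeFirst_of_move_right hvR hwR hm') hx₁w'

theorem le_ncard [Finite X.Pos]
    (hirr : ∀ z, ¬ X.SafeFirst .R z → X.size z < m → ¬ Precedes X Y z z)
    (h : Ladder X Y m n x) : n ≤ {z | Precedes X Y z x}.ncard := by
  induction h with
  | base => exact Nat.zero_le _
  | @step n x y hx hxy _ ih =>
    have hnot : x ∉ {z | Precedes X Y z x} := hirr x hx.not_safeFirst hx.size_lt
    have hsub : insert x {z | Precedes X Y z x} ⊆ {z | Precedes X Y z y} :=
      Set.insert_subset hxy fun z hz => hz.trans hxy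
    calc n + 1 ≤ {z | Precedes X Y z x}.ncard + 1 := Nat.add_le_add_right ih 1
      _ = (insert x {z | Precedes X Y z x}).ncard := (Set.ncard_insert_of_notMem hnot).symm
      _ ≤ {z | Precedes X Y z y}.ncard := Set.ncard_le_ncard hsub

end Ladder

theorem exists_move_not_safeFirst {a : X.Pos} (ha : ¬ X.SafeFirst .R a) (haL : ¬ X.won .L a) :
    ∃ c, X.move .L a c ∧ ¬ X.SafeFirst .R c := by
  have hs : ∃ y, X.move .R a y := not_forall_not.1 fun hs => ha (.stuck haL hs)
  obtain ⟨c, hc⟩ := hs.elim fun _ => X.exists_move_other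
  exact ⟨c, hc, fun h => ha (h.mono (X.le_other (X.le_of_move hc)))⟩

-- For a minimal `a`, the Left options of `a` carry ladders of every length.
theorem not_precedes_self [Finite X.Pos] {a : X.Pos} (ha : ¬ X.SafeFirst .R a) :
    ¬ Precedes X Y a a := by
  rintro ⟨b, hab_R, hab_L⟩
  have haL : ¬ X.won .L a := hab_R.not_won_left
  have haR : ¬ X.won .R a := hab_L.not_won_left
  have hbR : ¬ Y.won .R b := hab_L.not_won_right
  obtain ⟨c, hac, hc⟩ := exists_move_not_safeFirst ha haL
  have hladder (n : ℕ) : ∃ c, X.move .L a c ∧ Ladder X Y (X.size a) n c := by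
    induction n with
    | zero => exact ⟨c, hac, .base hc (X.size_lt_of_move hac)⟩
    | succ n ih =>
      obtain ⟨c, hac, hc⟩ := ih
      exact hc.exists_step Ladder.exists_reply haL le_rfl
        (hab_R.safeFirst_of_move_left haR hbR hac) hab_L
  obtain ⟨c, -, hc⟩ := hladder (Nat.card X.Pos + 1)
  have hle := (hc.le_ncard fun z hz (_ : X.size z < X.size a) => not_precedes_self hz).trans
    (Set.ncard_le_card _)
  exact hle.not_gt (Nat.lt_succ_self _)
termination_by X.size a

end Arena

/-! ### Achievement positional games as arenas -/

/-- The positions of `G` as an arena: each vertex is unpicked (`none`) or owned by the player who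
picked it. The numbers of vertices owned by the two players are unrelated. -/
def Game.arena (G : Game) : Arena where
  Pos := G.V → Option Player
  move p c c' := ∃ v, c v = none ∧ c' = Function.update c v (some p)
  won p c := ∃ e ∈ G.edges p, ∀ v ∈ e, ∃ hv : v ∈ G.V, c ⟨v, hv⟩ = some p
  size c := (Finset.univ.filter fun v => c v = none).card
  le p c c' := ∀ v, (c v = some p → c' v = some p) ∧
    (c' v = some p.other → c v = some p.other)
  size_lt_of_move := by
    rintro p c _ ⟨v, hv, rfl⟩
    refine Finset.card_lt_card (Finset.ssubset_iff_of_subset ?_ |>.2 ⟨v, ?_, ?_⟩)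
    · intro w
      grind [Function.update_apply]
    all_goals simp [hv]
  exists_move_other := by
    rintro p c _ ⟨v, hv, -⟩
    exact ⟨_, v, hv, rfl⟩
  le_refl _ _ _ := ⟨id, id⟩
  le_other h v := ⟨(h v).2, by simpa only [Player.other_other] using (h v).1⟩
  le_of_move := by
    rintro p c _ ⟨v, -, rfl⟩ w
    cases p <;> grind [Function.update_apply, Player.other]
  won_of_le := by
    rintro p c c' hle ⟨e, he, hc⟩
    exact ⟨e, he, fun v hv => (hc v hv).imp fun _ => (hle _).1⟩
  move_of_le := by
    rintro p c c' _ hle ⟨v, hv, rfl⟩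
    by_cases hv' : c' v = none
    · refine .inr ⟨_, ⟨v, hv', rfl⟩, fun w => ?_⟩
      have := hle w
      cases p <;> grind [Function.update_apply, Player.other]
    · obtain ⟨q, hq⟩ := Option.ne_none_iff_exists'.1 hv'
      rcases p.eq_or_eq_other q with rfl | rfl
      · exact .inl fun w => by grind [Function.update_apply]
      · exact absurd ((hle v).2 hq) (by simp [hv])

instance (G : Game) : Finite G.arena.Pos := inferInstanceAs (Finite (G.V → Option Player))

/-- The position of `G` before the first move. -/
def Game.start (G : Game) : G.arena.Pos := fun _ => none

theorem WellFormed.subset {G : Game} (hG : WellFormed G) {p : Player} {e : Finset ℕ}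
    (he : e ∈ G.edges p) : e ⊆ G.V := by
  cases p
  · exact (hG.1 e he).1
  · exact (hG.2 e he).1

theorem edges_gunion (G G' : Game) (p : Player) :
    (gunion G G').edges p = G.edges p ∪ G'.edges p := by
  cases p <;> rfl

/-- The restrictions to `G` and `G'` of a position of their union. -/
def splitPos (G G' : Game) (c : (gunion G G').arena.Pos) : (G.arena.prod G'.arena).Pos :=
  (fun v => c ⟨v, Finset.mem_union_left _ v.2⟩, fun v => c ⟨v, Finset.mem_union_right _ v.2⟩)

theorem splitPos_update_left {G G' : Game} (hdisj : Disjoint G.V G'.V)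
    (c : (gunion G G').arena.Pos) (v : G.V) (q : Option Player) :
    splitPos G G' (Function.update c ⟨v, Finset.mem_union_left _ v.2⟩ q) =
      (Function.update (splitPos G G' c).1 v q, (splitPos G G' c).2) :=
  Prod.ext
    (Function.update_comp_eq_of_injective c
      (f := fun v : G.V => (⟨v, Finset.mem_union_left _ v.2⟩ : (gunion G G').V))
      (fun _ _ h => Subtype.ext (Subtype.mk.inj h)) v q)
    (Function.update_comp_eq_of_forall_ne c q fun w h =>
      Finset.disjoint_left.1 hdisj v.2 (congrArg Subtype.val h ▸ w.2))

theorem splitPos_update_right {G G' : Game} (hdisj : Disjoint G.V G'.V)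
    (c : (gunion G G').arena.Pos) (v : G'.V) (q : Option Player) :
    splitPos G G' (Function.update c ⟨v, Finset.mem_union_right _ v.2⟩ q) =
      ((splitPos G G' c).1, Function.update (splitPos G G' c).2 v q) :=
  Prod.ext
    (Function.update_comp_eq_of_forall_ne c q fun w h =>
      Finset.disjoint_left.1 hdisj (congrArg Subtype.val h ▸ w.2) v.2)
    (Function.update_comp_eq_of_injective c
      (f := fun v : G'.V => (⟨v, Finset.mem_union_right _ v.2⟩ : (gunion G G').V))
      (fun _ _ h => Subtype.ext (Subtype.mk.inj h)) v q)

theorem won_splitPos {G G' : Game} (hG : WellFormed G) (hG' : WellFormed G') {p : Player}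
    {c : (gunion G G').arena.Pos} :
    (G.arena.prod G'.arena).won p (splitPos G G' c) ↔ (gunion G G').arena.won p c := by
  constructor
  · rintro (⟨e, he, h⟩ | ⟨e, he, h⟩)
    · refine ⟨e, edges_gunion G G' p ▸ Finset.mem_union_left _ he, fun v hv => ?_⟩
      exact (h v hv).elim fun hv h => ⟨Finset.mem_union_left _ hv, h⟩
    · refine ⟨e, edges_gunion G G' p ▸ Finset.mem_union_right _ he, fun v hv => ?_⟩
      exact (h v hv).elim fun hv h => ⟨Finset.mem_union_right _ hv, h⟩
  · rintro ⟨e, he, h⟩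
    rw [edges_gunion] at he
    refine (Finset.mem_union.1 he).imp (fun he => ⟨e, he, fun v hv => ?_⟩)
      fun he => ⟨e, he, fun v hv => ?_⟩
    · exact ⟨hG.subset he hv, (h v hv).elim fun _ h => h⟩
    · exact ⟨hG'.subset he hv, (h v hv).elim fun _ h => h⟩

theorem isBisim_splitPos {G G' : Game} (hG : WellFormed G) (hG' : WellFormed G')
    (hdisj : Disjoint G.V G'.V) : Arena.IsBisim (splitPos G G') where
  move_map := by
    rintro p c _ ⟨⟨v, hv⟩, hc, rfl⟩
    rcases Finset.mem_union.1 hv with hv | hv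
    · exact splitPos_update_left hdisj c ⟨v, hv⟩ _ ▸ .left ⟨⟨v, hv⟩, hc, rfl⟩
    · exact splitPos_update_right hdisj c ⟨v, hv⟩ _ ▸ .right ⟨⟨v, hv⟩, hc, rfl⟩
  move_lift := by
    rintro p c c' (⟨v, hc, rfl⟩ | ⟨v, hc, rfl⟩)
    · exact ⟨_, ⟨_, hc, rfl⟩, splitPos_update_left hdisj c v _⟩
    · exact ⟨_, ⟨_, hc, rfl⟩, splitPos_update_right hdisj c v _⟩
  won_iff := won_splitPos hG hG'

theorem mover_succ (s : Player) (i : ℕ) : mover s (i + 1) = (mover s i).other := by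
  unfold mover
  rcases Nat.mod_two_eq_zero_or_one i with h | h
  · rw [if_neg (by omega), if_pos h]
  · rw [if_pos (by omega), if_neg (by omega), Player.other_other]

theorem mover_length_append {s p : Player} {h : List ℕ} (hm : mover s h.length = p) (x : ℕ) :
    mover s (h ++ [x]).length = p.other := by
  rw [List.length_append, List.length_singleton, mover_succ, hm]

theorem mem_picked {s p : Player} {h : List ℕ} (hd : h.Nodup) {x : ℕ} :
    x ∈ picked s p h ↔ x ∈ h ∧ mover s (h.idxOf x) = p := by
  simp only [picked, Finset.mem_image, Finset.mem_filter, Finset.mem_range]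
  constructor
  · rintro ⟨i, ⟨hi, hm⟩, rfl⟩
    rw [List.getD_eq_getElem _ _ hi, hd.idxOf_getElem]
    exact ⟨List.getElem_mem hi, hm⟩
  · rintro ⟨hx, hm⟩
    have hi := List.idxOf_lt_length_of_mem hx
    exact ⟨_, ⟨hi, hm⟩, by rw [List.getD_eq_getElem _ _ hi, List.getElem_idxOf]⟩

theorem ended_iff {G : Game} {s : Player} {h : List ℕ} (p : Player) :
    ended G s h ↔
      fills (G.edges p) (picked s p h) ∨ fills (G.edges p.other) (picked s p.other h) := by
  cases p
  · exact Iff.rfl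
  · exact or_comm

/-- The position of `G` after the moves `h`, when `s` moved first. -/
def Game.position (G : Game) (s : Player) (h : List ℕ) : G.V → Option Player :=
  fun v => if (v : ℕ) ∈ h then some (mover s (h.idxOf (v : ℕ))) else none

namespace ValidHist

variable {G : Game} {s p : Player} {h : List ℕ}

theorem append (hv : ValidHist G s h) (hend : ¬ ended G s h) {x : ℕ} (hx : x ∈ G.V)
    (hxh : x ∉ h) : ValidHist G s (h ++ [x]) := by
  obtain ⟨hd, hV, hlast⟩ := hv
  refine ⟨by grind, by grind, fun k hk => ?_⟩
  rw [List.length_append, List.length_singleton] at hk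
  rw [List.take_append_of_le_length (by omega)]
  rcases Nat.lt_or_ge k h.length with hk' | hk'
  · exact hlast k hk'
  · rwa [List.take_of_length_le hk']

theorem length_le (hv : ValidHist G s h) : h.length ≤ G.V.card := by
  rw [← List.toFinset_card_of_nodup hv.1]
  exact Finset.card_le_card fun x hx => hv.2.1 x (List.mem_toFinset.1 hx)

theorem exists_notMem (hv : ValidHist G s h) (hl : h.length < G.V.card) : ∃ x ∈ G.V, x ∉ h := by
  rw [← List.toFinset_card_of_nodup hv.1] at hl
  simpa only [List.mem_toFinset] using Finset.exists_mem_notMem_of_card_lt_card hl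

theorem won_position_iff (hv : ValidHist G s h) :
    G.arena.won p (G.position s h) ↔ fills (G.edges p) (picked s p h) := by
  have hmem (x : ℕ) :
      (∃ hx : x ∈ G.V, G.position s h ⟨x, hx⟩ = some p) ↔ x ∈ picked s p h := by
    rw [mem_picked hv.1]
    have := hv.2.1 x
    simp only [Game.position, Option.ite_none_right_eq_some, Option.some.injEq]
    tauto
  exact exists_congr fun e => and_congr_right fun _ => forall₂_congr fun x _ => hmem x

theorem ended_iff_won (hv : ValidHist G s h) (p : Player) :
    ended G s h ↔
      G.arena.won p (G.position s h) ∨ G.arena.won p.other (G.position s h) := by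
  rw [ended_iff p, hv.won_position_iff, hv.won_position_iff]

end ValidHist

section Position

variable {G : Game} {s p : Player} {h : List ℕ}

theorem position_append {x : ℕ} (hx : x ∈ G.V) (hxh : x ∉ h) :
    G.position s (h ++ [x]) =
      Function.update (G.position s h) ⟨x, hx⟩ (some (mover s h.length)) := by
  funext ⟨y, hy⟩
  rw [Function.update_apply]
  split_ifs with hyx
  · obtain rfl : y = x := Subtype.ext_iff.1 hyx
    simp [Game.position, List.idxOf_append_of_notMem hxh]
  · have hne : y ≠ x := fun h => hyx (Subtype.ext h)
    by_cases hyh : y ∈ h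
    · simp [Game.position, hyh, List.idxOf_append_of_mem hyh]
    · simp [Game.position, hne, hyh]

theorem move_position_iff (hm : mover s h.length = p) {c : G.arena.Pos} :
    G.arena.move p (G.position s h) c ↔ ∃ x ∈ G.V, x ∉ h ∧ c = G.position s (h ++ [x]) := by
  have hnone (v : G.V) : G.position s h v = none ↔ (v : ℕ) ∉ h := by simp [Game.position]
  constructor
  · rintro ⟨v, hv, rfl⟩
    have hvh := (hnone v).1 hv
    exact ⟨v, v.2, hvh, by rw [position_append v.2 hvh, hm]⟩
  · rintro ⟨x, hx, hxh, rfl⟩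
    exact ⟨⟨x, hx⟩, (hnone _).2 hxh, by rw [position_append hx hxh, hm]⟩

end Position

theorem Follows.append {s p : Player} {σ : Strategy} {h : List ℕ} (hf : Follows s p σ h)
    {x : ℕ} (hx : mover s h.length = p → x = σ h) : Follows s p σ (h ++ [x]) := by
  intro k hk hm
  rw [List.length_append, List.length_singleton] at hk
  rw [List.take_append_of_le_length (by omega)]
  rcases Nat.lt_or_ge k h.length with hk' | hk'
  · rw [← hf k hk' hm, List.getD_append _ _ _ _ hk']
  · obtain rfl : k = h.length := by omega
    simp [hx hm]

/-- `σ` is a non-losing strategy of `p` on `G` when `s` moves first. -/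
def IsNonLosing (G : Game) (s p : Player) (σ : Strategy) : Prop :=
  Legal G s p σ ∧ ∀ h, ValidHist G s h → Follows s p σ h → Complete G s h →
    ¬ fills (G.edges p.other) (picked s p.other h)

/-- `σ` is a winning strategy of `p` on `G` when `s` moves first. -/
def IsWinning (G : Game) (s p : Player) (σ : Strategy) : Prop :=
  Legal G s p σ ∧ ∀ h, ValidHist G s h → Follows s p σ h → Complete G s h →
    fills (G.edges p) (picked s p h)

section Strategies

variable {G : Game} {s p : Player} {σ : Strategy}

theorem IsNonLosing.not_won_other (hσ : IsNonLosing G s p σ)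
    {h : List ℕ} (hv : ValidHist G s h) (hf : Follows s p σ h) :
    ¬ G.arena.won p.other (G.position s h) := fun hw =>
  hσ.2 h hv hf (.inl ((hv.ended_iff_won p).2 (.inr hw))) (hv.won_position_iff.1 hw)

mutual

theorem IsNonLosing.safeFirst (hσ : IsNonLosing G s p σ)
    {h : List ℕ} (hv : ValidHist G s h) (hf : Follows s p σ h) (hm : mover s h.length = p) :
    G.arena.SafeFirst p (G.position s h) := by
  have hlose := hσ.not_won_other hv hf
  by_cases hwin : G.arena.won p (G.position s h)
  · exact .won hlose hwin
  have hend : ¬ ended G s h := mt (hv.ended_iff_won p).1 (not_or.2 ⟨hwin, hlose⟩)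
  by_cases hl : h.length < G.V.card
  · obtain ⟨hx, hxh⟩ := hσ.1 h hv hf hend hl hm
    exact .move hlose ((move_position_iff hm).2 ⟨_, hx, hxh, rfl⟩)
      (hσ.safeSecond (hv.append hend hx hxh) (hf.append fun _ => rfl)
        (mover_length_append hm _))
  · refine .stuck hlose fun c hc => hl ?_
    obtain ⟨x, hx, hxh, -⟩ := (move_position_iff hm).1 hc
    simpa using (hv.append hend hx hxh).length_le
termination_by G.V.card - h.length
decreasing_by simp only [List.length_append, List.length_singleton]; omega

theorem IsNonLosing.safeSecond (hσ : IsNonLosing G s p σ)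
    {h : List ℕ} (hv : ValidHist G s h) (hf : Follows s p σ h)
    (hm : mover s h.length = p.other) : G.arena.SafeSecond p (G.position s h) := by
  have hlose := hσ.not_won_other hv hf
  by_cases hwin : G.arena.won p (G.position s h)
  · exact .won hlose hwin
  have hend : ¬ ended G s h := mt (hv.ended_iff_won p).1 (not_or.2 ⟨hwin, hlose⟩)
  refine .forall_move hlose fun c hc => ?_
  obtain ⟨x, hx, hxh, rfl⟩ := (move_position_iff hm).1 hc
  have hv' := hv.append hend hx hxh
  have : h.length < G.V.card := by simpa using hv'.length_le
  exact hσ.safeFirst hv'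
    (hf.append fun hm' => absurd (hm.symm.trans hm') p.other_ne)
    ((mover_length_append hm x).trans p.other_other)
termination_by G.V.card - h.length
decreasing_by simp only [List.length_append, List.length_singleton]; omega

end

theorem IsWinning.not_ended_and_length_lt (hσ : IsWinning G s p.other σ)
    {h : List ℕ} (hv : ValidHist G s h) (hf : Follows s p.other σ h)
    (hlose : ¬ G.arena.won p.other (G.position s h)) :
    ¬ ended G s h ∧ h.length < G.V.card := by
  have hc : ¬ Complete G s h := fun hc => hlose (hv.won_position_iff.2 (hσ.2 h hv hf hc))
  exact ⟨fun h => hc (.inl h), lt_of_le_of_ne hv.length_le fun h => hc (.inr h)⟩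

mutual

theorem IsWinning.not_safeFirst (hσ : IsWinning G s p.other σ)
    {h : List ℕ} (hv : ValidHist G s h) (hf : Follows s p.other σ h)
    (hm : mover s h.length = p) : ¬ G.arena.SafeFirst p (G.position s h) := by
  intro hs
  obtain ⟨hend, hl⟩ := hσ.not_ended_and_length_lt hv hf hs.not_won_other
  have hwin : ¬ G.arena.won p (G.position s h) := fun h =>
    hend ((hv.ended_iff_won p).2 (.inl h))
  rcases hs.stuck_or_exists_move hwin with hstuck | ⟨c, hc, hs'⟩
  · obtain ⟨x, hx, hxh⟩ := hv.exists_notMem hl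
    exact hstuck _ ((move_position_iff hm).2 ⟨x, hx, hxh, rfl⟩)
  · obtain ⟨x, hx, hxh, rfl⟩ := (move_position_iff hm).1 hc
    exact hσ.not_safeSecond (hv.append hend hx hxh)
      (hf.append fun hm' => absurd (hm'.symm.trans hm) p.other_ne) (mover_length_append hm x) hs'
termination_by G.V.card - h.length
decreasing_by simp only [List.length_append, List.length_singleton]; omega

theorem IsWinning.not_safeSecond (hσ : IsWinning G s p.other σ)
    {h : List ℕ} (hv : ValidHist G s h) (hf : Follows s p.other σ h)
    (hm : mover s h.length = p.other) : ¬ G.arena.SafeSecond p (G.position s h) := by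
  intro hs
  obtain ⟨hend, hl⟩ := hσ.not_ended_and_length_lt hv hf hs.not_won_other
  have hwin : ¬ G.arena.won p (G.position s h) := fun h =>
    hend ((hv.ended_iff_won p).2 (.inl h))
  obtain ⟨hx, hxh⟩ := hσ.1 h hv hf hend hl hm
  exact hσ.not_safeFirst (hv.append hend hx hxh) (hf.append fun _ => rfl)
    ((mover_length_append hm _).trans p.other_other)
    (hs.safeFirst_of_move hwin ((move_position_iff hm).2 ⟨_, hx, hxh, rfl⟩))
termination_by G.V.card - h.length
decreasing_by simp only [List.length_append, List.length_singleton]; omega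

end

end Strategies

theorem validHist_nil (G : Game) (s : Player) : ValidHist G s [] :=
  ⟨List.nodup_nil, fun _ h => absurd h List.not_mem_nil, fun k h => absurd h k.not_lt_zero⟩

theorem follows_nil (s p : Player) (σ : Strategy) : Follows s p σ [] :=
  fun k h => absurd h k.not_lt_zero

theorem NonLosingAs.safeSecond {G : Game} {p : Player} (h : NonLosingAs G p.other p) :
    G.arena.SafeSecond p G.start := by
  obtain ⟨σ, hσ⟩ := h
  exact IsNonLosing.safeSecond hσ (validHist_nil G _) (follows_nil _ p σ) rfl

theorem WinsAs.not_safeFirst {G : Game} {p : Player} (h : WinsAs G p p.other) :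
    ¬ G.arena.SafeFirst p G.start := by
  obtain ⟨σ, hσ⟩ := h
  exact IsWinning.not_safeFirst hσ (validHist_nil G _) (follows_nil _ _ σ) rfl

theorem NonLosingAs.safeSecond_prod {G G' : Game} (hG : WellFormed G) (hG' : WellFormed G')
    (hdisj : Disjoint G.V G'.V) {p : Player} (h : NonLosingAs (gunion G G') p.other p) :
    (G.arena.prod G'.arena).SafeSecond p (G.start, G'.start) :=
  (isBisim_splitPos hG hG' hdisj).safeSecond h.safeSecond

theorem union_L_R_not_draw_general (G G' : Game) (hG : WellFormed G) (hG' : WellFormed G')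
    (hdisj : Disjoint G.V G'.V) (hwin : WinsAs G .R .L) : ¬ hasOutcome (gunion G G') oD := by
  rintro ⟨⟨-, hR⟩, ⟨hL, -⟩⟩
  exact Arena.not_precedes_self (WinsAs.not_safeFirst (p := .R) hwin)
    ⟨G'.start, NonLosingAs.safeSecond_prod hG hG' hdisj (p := .R) hR,
      NonLosingAs.safeSecond_prod hG hG' hdisj (p := .L) hL⟩

/-- If `o(G) = L` and `o(G') = R`, then `o(G ∪ G') ≠ D`. -/
theorem union_L_R_not_draw (G G' : Game) (hG : WellFormed G) (hG' : WellFormed G')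
    (hdisj : Disjoint G.V G'.V)
    (hGo : hasOutcome G oL) (hG'o : hasOutcome G' oR) :
    ¬ hasOutcome (gunion G G') oD :=
  union_L_R_not_draw_general G G' hG hG' hdisj hGo.2

end APG
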